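/- Let k ≥ 2 be an integer, let u be a real number with 0 < |u| < 1/2, and let L ≥ 0. Then ∑_{ℓ=2}^k I_{k,ℓ}(u,L) · Ĩ_{k,ℓ}(u,L) = (2π / (u · sin(2πu))) · 4^{1−k} · L^{2k−4} · ∑_{p=1}^∞ u^{2p} · L^{2p} · 2·p! / ((2p)! · (k−2)! · (k+p−2)!), where the series on the right converges absolutely. -/

import Mathlib

open Real MeasureTheory

/-- `I_{k,ℓ}(u,L)`: the integral of `exp(2u(v₁+⋯+v_{ℓ−1}))` over the open simplex
`{v ∈ ℝ^{k−1} : vᵢ > 0, v₁+⋯+v_{k−1} < L/2}` (coordinates are 0-indexed: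
`v i` is `v_{i+1}`). -/
noncomputable def Ikl (k l : ℕ) (u L : ℝ) : ℝ :=
  ∫ v in {v : Fin (k-1) → ℝ | (∀ i, 0 < v i) ∧ ∑ i, v i < L/2},
    Real.exp (2 * u * ∑ i ∈ Finset.univ.filter (fun i : Fin (k-1) => i.val < l - 1), v i)

/-- The `j`-th (1-indexed) coordinate `w_j` for `1 ≤ j ≤ k−1`, with the convention
`w_k = L/2 − (w₁+⋯+w_{k−1})`. -/
noncomputable def wcoord (k : ℕ) (L : ℝ) (w : Fin (k-1) → ℝ) (j : ℕ) : ℝ :=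
  if h : j - 1 < k - 1 then w ⟨j - 1, h⟩ else L/2 - ∑ i, w i

/-- `Ĩ_{k,ℓ}(u,L)`: the integral of
`exp(−2u(w₂+⋯+w_ℓ))·(1−e^{−w_ℓ})^{−2u}·(1−e^{−w₁})^{2u}` over the open simplex
`{w ∈ ℝ^{k−1} : wᵢ > 0, w₁+⋯+w_{k−1} < L/2}`, where `w_k = L/2 − (w₁+⋯+w_{k−1})`. -/
noncomputable def Itkl (k l : ℕ) (u L : ℝ) : ℝ :=
  ∫ w in {w : Fin (k-1) → ℝ | (∀ i, 0 < w i) ∧ ∑ i, w i < L/2},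
    Real.exp (-(2*u) * ∑ j ∈ Finset.Icc 2 l, wcoord k L w j)
      * (1 - Real.exp (-(wcoord k L w l))) ^ (-(2*u))
      * (1 - Real.exp (-(wcoord k L w 1))) ^ (2*u)

/-!
Put `a = 2u` and `T = L/2`. Both integrals are iterated convolutions on the half-line evaluated
at `T`. For `I_{k,ℓ}` the factors are `ℓ - 1` copies of `exp (a x)` and `k - ℓ + 1` copies of `1`.
In `Ĩ_{k,ℓ}` the factor `(1 - exp (-x)) ^ a` can be moved next to
`exp (-a x) (1 - exp (-x)) ^ (-a)`, and a beta integral shows that the convolution of these two is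
`Γ(1 + a) Γ(1 - a) = π a / sin (π a)` times that of `exp (-a x)` and `1`. Hence `Ĩ_{k,ℓ}` is this
constant times the kernel of `I_{k,ℓ}` with `a` replaced by `-a`.

For the sum over `ℓ`, evaluate the two kernels at independent lengths `x` and `y`. Along
`x + y = 2T` the sum solves a first-order linear differential equation whose inhomogeneous term
telescopes, which gives a multiple of `∫ s in 0..T, (T² - s²) ^ (k - 2) * sinh (a s)`; expanding
`sinh` yields the series.
-/

open Finset.HasAntidiagonal (antidiagonal)
open scoped ENNReal Nat

section ExpKernel

/-- The convolution of `p` copies of `x ↦ exp (a x)` and `q + 1` copies of `1` on the half-line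
`x > 0`, evaluated at `T`; equivalently, the integral of `exp (a (v₁ + ⋯ + v_p))` over the simplex
`{v ∈ ℝ^{p+q} : vᵢ > 0, ∑ vᵢ < T}`. -/
noncomputable def expKernel (a : ℝ) : ℕ → ℕ → ℝ → ℝ
  | 0, q, T => T ^ q / q !
  | p + 1, q, T => ∫ x in 0..T, exp (a * (T - x)) * expKernel a p q x

lemma hasDerivAt_integral_exp_mul (a : ℝ) {h : ℝ → ℝ} (hh : Continuous h) (T : ℝ) :
    HasDerivAt (fun T ↦ ∫ x in 0..T, exp (a * (T - x)) * h x)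
      (a * (∫ x in 0..T, exp (a * (T - x)) * h x) + h T) T := by
  have factor (t : ℝ) : ∫ x in 0..t, exp (a * (t - x)) * h x
      = exp (a * t) * ∫ x in 0..t, exp (-(a * x)) * h x := by
    rw [← intervalIntegral.integral_const_mul]
    congr with x
    rw [← mul_assoc, ← exp_add]
    ring_nf
  simp only [factor]
  have hexp : HasDerivAt (fun t ↦ exp (a * t)) (exp (a * T) * a) T := by
    simpa using ((hasDerivAt_id T).const_mul a).exp
  have hint : HasDerivAt (fun t ↦ ∫ x in 0..t, exp (-(a * x)) * h x)
      (exp (-(a * T)) * h T) T :=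
    (by fun_prop : Continuous fun x ↦ exp (-(a * x)) * h x).integral_hasStrictDerivAt 0 T
      |>.hasDerivAt
  refine (hexp.mul hint).congr_deriv ?_
  rw [← mul_assoc (exp (a * T)) (exp (-(a * T))), ← exp_add, add_neg_cancel, exp_zero]
  ring

lemma integral_exp_mul_deriv (a : ℝ) {g g' : ℝ → ℝ} (hg : ∀ x, HasDerivAt g (g' x) x)
    (hg' : Continuous g') (T : ℝ) :
    ∫ x in 0..T, exp (a * (T - x)) * g' x
      = a * (∫ x in 0..T, exp (a * (T - x)) * g x) + g T - exp (a * T) * g 0 := by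
  have hexp (x : ℝ) : HasDerivAt (fun x ↦ exp (a * (T - x))) (-(a * exp (a * (T - x)))) x :=
    (((hasDerivAt_id x).const_sub T).const_mul a).exp.congr_deriv (by simp only [id]; ring)
  rw [intervalIntegral.integral_mul_deriv_eq_deriv_mul (fun x _ ↦ hexp x) (fun x _ ↦ hg x)
    (Continuous.intervalIntegrable (by fun_prop) _ _) (hg'.intervalIntegrable _ _)]
  simp only [neg_mul, mul_assoc, intervalIntegral.integral_neg,
    intervalIntegral.integral_const_mul, sub_self, mul_zero, exp_zero, one_mul, sub_zero]
  ring

lemma continuous_expKernel (a : ℝ) (p q : ℕ) : Continuous (expKernel a p q) := by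
  induction p with
  | zero => simp only [expKernel]; fun_prop
  | succ p ih =>
    exact continuous_iff_continuousAt.2 fun T ↦ (hasDerivAt_integral_exp_mul a ih T).continuousAt

lemma expKernel_nonneg (a : ℝ) (p q : ℕ) {T : ℝ} (hT : 0 ≤ T) : 0 ≤ expKernel a p q T := by
  induction p generalizing T with
  | zero => simp only [expKernel]; positivity
  | succ p ih =>
    exact intervalIntegral.integral_nonneg hT fun x hx ↦ mul_nonneg (exp_nonneg _) (ih hx.1)

lemma expKernel_succ_left_apply_zero (a : ℝ) (p q : ℕ) : expKernel a (p + 1) q 0 = 0 :=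
  intervalIntegral.integral_same

lemma hasDerivAt_expKernel_succ_left (a : ℝ) (p q : ℕ) (T : ℝ) :
    HasDerivAt (expKernel a (p + 1) q) (a * expKernel a (p + 1) q T + expKernel a p q T) T :=
  hasDerivAt_integral_exp_mul a (continuous_expKernel a p q) T

lemma hasDerivAt_pow_succ_div_factorial (n : ℕ) (x : ℝ) :
    HasDerivAt (fun x : ℝ ↦ x ^ (n + 1) / (n + 1)!) (x ^ n / n !) x := by
  refine ((hasDerivAt_pow (n + 1) x).div_const _).congr_deriv ?_
  rw [Nat.factorial_succ, Nat.add_sub_cancel]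
  push_cast
  field_simp

lemma expKernel_succ_right_apply_zero (a : ℝ) (p q : ℕ) : expKernel a p (q + 1) 0 = 0 := by
  cases p with
  | zero => simp [expKernel]
  | succ p => exact expKernel_succ_left_apply_zero a p _

lemma hasDerivAt_expKernel_succ_right (a : ℝ) (p q : ℕ) (T : ℝ) :
    HasDerivAt (expKernel a p (q + 1)) (expKernel a p q T) T := by
  induction p generalizing T with
  | zero => exact hasDerivAt_pow_succ_div_factorial q T
  | succ p ih =>
    have parts := integral_exp_mul_deriv a ih (continuous_expKernel a p q) T
    rw [expKernel_succ_right_apply_zero, mul_zero, sub_zero] at parts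
    exact (hasDerivAt_expKernel_succ_left a p (q + 1) T).congr_deriv parts.symm

lemma mul_expKernel_succ_add_expKernel_succ (a : ℝ) (p q : ℕ) (T : ℝ) :
    a * expKernel a (p + 1) (q + 1) T + expKernel a p (q + 1) T = expKernel a (p + 1) q T :=
  (hasDerivAt_expKernel_succ_left a p (q + 1) T).unique
    (hasDerivAt_expKernel_succ_right a (p + 1) q T)

lemma mul_expKernel_succ_add_expKernel_zero (a : ℝ) (p : ℕ) (T : ℝ) :
    a * expKernel a (p + 1) 0 T + expKernel a p 0 T = exp (a * T) * (T ^ p / p !) := by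
  induction p generalizing T with
  | zero =>
    have parts := integral_exp_mul_deriv a (fun x ↦ hasDerivAt_const x (1 : ℝ)) continuous_const T
    simp only [mul_zero, intervalIntegral.integral_zero, mul_one] at parts
    simp only [expKernel, pow_zero, Nat.factorial_zero, Nat.cast_one, div_one, mul_one]
    linarith
  | succ p ih =>
    have parts := integral_exp_mul_deriv a
      (fun x ↦ (hasDerivAt_expKernel_succ_left a p 0 x).congr_deriv (ih x)) (by fun_prop) T
    have lhs : ∫ x in 0..T, exp (a * (T - x)) * (exp (a * x) * (x ^ p / p !))
        = exp (a * T) * (T ^ (p + 1) / (p + 1)!) := by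
      have cancel (x : ℝ) : exp (a * (T - x)) * (exp (a * x) * (x ^ p / p !))
          = exp (a * T) * (x ^ p / p !) := by
        rw [← mul_assoc, ← exp_add]
        ring_nf
      simp only [cancel, intervalIntegral.integral_const_mul]
      rw [intervalIntegral.integral_eq_sub_of_hasDerivAt
        (fun x _ ↦ hasDerivAt_pow_succ_div_factorial p x)
        (Continuous.intervalIntegrable (by fun_prop) _ _)]
      simp
    rw [lhs, expKernel_succ_left_apply_zero, mul_zero, sub_zero] at parts
    exact parts.symm

end ExpKernel

section PairedKernelSum

/-- The sum over exit edges `∑_{p+q=n} K_{p+1,q}(a; x) K_{p+1,q}(-a; y)`, where `K` is `expKernel`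
and the two length parameters are kept independent. -/
noncomputable def pairedKernelSum (a : ℝ) (n : ℕ) (x y : ℝ) : ℝ :=
  ∑ pq ∈ antidiagonal n,
    expKernel a (pq.1 + 1) pq.2 x * expKernel (-a) (pq.1 + 1) pq.2 y

-- By the recurrence in `q`, the product of brackets at `(p, q + 1)` is the product of kernels
-- at `(p + 1, q)`, so the sum telescopes to its two end terms.
lemma sum_expKernel_mul_sub_telescope (a b : ℝ) (n : ℕ) (x y : ℝ) :
    ∑ pq ∈ antidiagonal n, (expKernel a pq.1 pq.2 x * expKernel b pq.1 pq.2 y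
        - (a * expKernel a (pq.1 + 1) pq.2 x + expKernel a pq.1 pq.2 x)
          * (b * expKernel b (pq.1 + 1) pq.2 y + expKernel b pq.1 pq.2 y))
      = (1 - exp (a * x + b * y)) * ((x * y) ^ n / (n ! : ℝ) ^ 2) := by
  have first : expKernel a 0 n x * expKernel b 0 n y = (x * y) ^ n / (n ! : ℝ) ^ 2 := by
    simp only [expKernel]
    ring
  have last : exp (a * x) * (x ^ n / n !) * (exp (b * y) * (y ^ n / n !))
      = exp (a * x + b * y) * ((x * y) ^ n / (n ! : ℝ) ^ 2) := by
    rw [exp_add]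
    ring
  rw [Finset.sum_sub_distrib]
  cases n with
  | zero =>
    simp only [Finset.Nat.antidiagonal_zero, Finset.sum_singleton,
      mul_expKernel_succ_add_expKernel_zero, first, last]
    ring
  | succ n =>
    rw [Finset.Nat.sum_antidiagonal_succ, Finset.Nat.sum_antidiagonal_succ']
    simp only [mul_expKernel_succ_add_expKernel_zero, mul_expKernel_succ_add_expKernel_succ,
      first, last]
    ring

lemma hasDerivAt_pairedKernelSum {a : ℝ} (ha : a ≠ 0) (n : ℕ) (c t : ℝ) :
    HasDerivAt (fun t ↦ pairedKernelSum a n t (c - t))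
      (a * pairedKernelSum a n t (c - t)
        + (1 - exp (a * t - a * (c - t))) * ((t * (c - t)) ^ n / (n ! : ℝ) ^ 2) / a) t := by
  have hterm (pq : ℕ × ℕ) := (hasDerivAt_expKernel_succ_left a pq.1 pq.2 t).mul
    ((hasDerivAt_expKernel_succ_left (-a) pq.1 pq.2 (c - t)).comp t ((hasDerivAt_id t).const_sub c))
  unfold pairedKernelSum
  refine (HasDerivAt.fun_sum fun pq _ ↦ hterm pq).congr_deriv ?_
  have telescope := sum_expKernel_mul_sub_telescope a (-a) n t (c - t)
  rw [neg_mul, ← sub_eq_add_neg] at telescope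
  rw [← telescope, Finset.mul_sum, Finset.sum_div, ← Finset.sum_add_distrib]
  refine Finset.sum_congr rfl fun pq _ ↦ ?_
  simp only [Function.comp_apply]
  field_simp
  ring

lemma pairedKernelSum_eq_integral_sinh {a : ℝ} (ha : a ≠ 0) (n : ℕ) (T : ℝ) :
    pairedKernelSum a n T T
      = 2 / (a * (n ! : ℝ) ^ 2) * ∫ s in 0..T, (T ^ 2 - s ^ 2) ^ n * sinh (a * s) := by
  have hexp (t : ℝ) : HasDerivAt (fun t ↦ exp (a * (T - t))) (exp (a * (T - t)) * (a * -1)) t :=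
    (((hasDerivAt_id t).const_sub T).const_mul a).exp
  have hderiv (t : ℝ) : HasDerivAt
      (fun t ↦ exp (a * (T - t)) * pairedKernelSum a n t (2 * T - t))
      (2 / (a * (n ! : ℝ) ^ 2) * ((T ^ 2 - (T - t) ^ 2) ^ n * sinh (a * (T - t)))) t := by
    refine ((hexp t).mul (hasDerivAt_pairedKernelSum ha n (2 * T) t)).congr_deriv ?_
    have hsinh : exp (a * (T - t)) * (1 - exp (a * t - a * (2 * T - t)))
        = 2 * sinh (a * (T - t)) := by
      rw [sinh_eq, mul_sub, ← exp_add]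
      ring_nf
    rw [show T ^ 2 - (T - t) ^ 2 = t * (2 * T - t) by ring]
    linear_combination ((t * (2 * T - t)) ^ n / (n ! : ℝ) ^ 2 / a) * hsinh
  have hstart : pairedKernelSum a n 0 (2 * T) = 0 := by
    simp [pairedKernelSum, expKernel_succ_left_apply_zero]
  have ftc := intervalIntegral.integral_eq_sub_of_hasDerivAt (a := 0) (b := T)
    (fun t _ ↦ hderiv t) (Continuous.intervalIntegrable (by fun_prop) _ _)
  rw [intervalIntegral.integral_const_mul, intervalIntegral.integral_comp_sub_left
    (fun s ↦ (T ^ 2 - s ^ 2) ^ n * sinh (a * s)) T] at ftc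
  simp only [sub_self, sub_zero, hstart, mul_zero, exp_zero, one_mul,
    show 2 * T - T = T by ring] at ftc
  exact ftc.symm

end PairedKernelSum

section SinhSeries

lemma integral_pow_mul_sq_sub_sq_pow (T : ℝ) (n p : ℕ) :
    ∫ s in 0..T, (T ^ 2 - s ^ 2) ^ n * s ^ (2 * p + 1)
      = T ^ (2 * n + 2 * p + 2) * p ! * n ! / (2 * (n + p + 1)!) := by
  induction n generalizing p with
  | zero =>
    simp only [pow_zero, one_mul, integral_pow, zero_add, Nat.factorial_zero,
      Nat.factorial_succ p]
    push_cast
    field_simp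
    ring
  | succ n ih =>
    have hpow (s : ℝ) :
        HasDerivAt (fun s : ℝ ↦ s ^ (2 * p + 2) / (2 * p + 2)) (s ^ (2 * p + 1)) s := by
      refine ((hasDerivAt_pow (2 * p + 2) s).div_const _).congr_deriv ?_
      push_cast
      field_simp
    have hbase (s : ℝ) : HasDerivAt (fun s ↦ (T ^ 2 - s ^ 2) ^ (n + 1))
        (-(2 * (n + 1)) * ((T ^ 2 - s ^ 2) ^ n * s)) s := by
      refine (((hasDerivAt_pow 2 s).const_sub (T ^ 2)).pow (n + 1)).congr_deriv ?_
      simp only [Nat.add_sub_cancel, Nat.reduceSub, pow_one]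
      push_cast
      ring
    have parts := intervalIntegral.integral_mul_deriv_eq_deriv_mul (a := 0) (b := T)
      (fun s _ ↦ hbase s) (fun s _ ↦ hpow s) (Continuous.intervalIntegrable (by fun_prop) _ _)
      (Continuous.intervalIntegrable (by fun_prop) _ _)
    have collect (s : ℝ) : -(2 * (n + 1 : ℝ)) * ((T ^ 2 - s ^ 2) ^ n * s)
        * (s ^ (2 * p + 2) / (2 * p + 2))
        = -((n + 1) / (p + 1)) * ((T ^ 2 - s ^ 2) ^ n * s ^ (2 * (p + 1) + 1)) := by
      field_simp
      ring
    rw [parts]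
    simp only [collect, intervalIntegral.integral_const_mul, ih]
    rw [Nat.factorial_succ p, Nat.factorial_succ n, show n + (p + 1) + 1 = n + 1 + p + 1 by ring]
    simp only [sub_self, ne_eq, Nat.add_eq_zero_iff, one_ne_zero, and_false, not_false_eq_true,
      zero_pow, OfNat.ofNat_ne_zero, zero_mul, zero_div, mul_zero]
    push_cast
    field_simp
    ring

lemma hasSum_integral_mul_sinh {g : ℝ → ℝ} (hg : Continuous g) (a T : ℝ) :
    HasSum (fun p : ℕ ↦ a ^ (2 * p + 1) / (2 * p + 1)! * ∫ s in 0..T, g s * s ^ (2 * p + 1))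
      (∫ s in 0..T, g s * sinh (a * s)) := by
  have hsum (s : ℝ) : HasSum (fun p : ℕ ↦ a ^ (2 * p + 1) / (2 * p + 1)! * (g s * s ^ (2 * p + 1)))
      (g s * sinh (a * s)) := by
    refine ((hasSum_sinh (a * s)).mul_left (g s)).congr_fun fun p ↦ ?_
    ring
  have hbound (s : ℝ) := (hasSum_sinh (|a| * |T|)).mul_left |g s|
  simp only [← intervalIntegral.integral_const_mul]
  refine intervalIntegral.hasSum_integral_of_dominated_convergence
    (fun p s ↦ |g s| * ((|a| * |T|) ^ (2 * p + 1) / (2 * p + 1)!))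
    (fun p ↦ (by fun_prop : Continuous _).aestronglyMeasurable)
    (fun p ↦ .of_forall fun s hs ↦ ?_) (.of_forall fun s _ ↦ (hbound s).summable) ?_
    (.of_forall fun s _ ↦ hsum s)
  · have hs' : |s| ≤ |T| := by simpa using Set.abs_sub_left_of_mem_uIcc (Set.uIoc_subset_uIcc hs)
    calc ‖a ^ (2 * p + 1) / (2 * p + 1)! * (g s * s ^ (2 * p + 1))‖
        = |g s| * ((|a| * |s|) ^ (2 * p + 1) / (2 * p + 1)!) := by
          simp only [norm_eq_abs, abs_mul, abs_div, abs_pow, Nat.abs_cast]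
          ring
      _ ≤ |g s| * ((|a| * |T|) ^ (2 * p + 1) / (2 * p + 1)!) := by gcongr
  · simp only [fun s ↦ (hbound s).tsum_eq]
    exact Continuous.intervalIntegrable (by fun_prop) _ _

lemma hasSum_pairedKernelSum {a : ℝ} (ha : a ≠ 0) (n : ℕ) (T : ℝ) :
    HasSum (fun q : ℕ ↦ T ^ (2 * n) * ((a * T) ^ (2 * (q + 1)) * (2 * (q + 1)!)
        / ((2 * (q + 1))! * n ! * (n + (q + 1))!)))
      (a ^ 2 * pairedKernelSum a n T T) := by
  have series := (hasSum_integral_mul_sinh (g := fun s ↦ (T ^ 2 - s ^ 2) ^ n) (by fun_prop) a T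
    ).mul_left (2 * a / (n ! : ℝ) ^ 2)
  have hvalue : a ^ 2 * pairedKernelSum a n T T
      = 2 * a / (n ! : ℝ) ^ 2 * ∫ s in 0..T, (T ^ 2 - s ^ 2) ^ n * sinh (a * s) := by
    rw [pairedKernelSum_eq_integral_sinh ha]
    field_simp
  rw [hvalue]
  refine series.congr_fun fun q ↦ ?_
  rw [integral_pow_mul_sq_sub_sq_pow, show 2 * (q + 1) = 2 * q + 1 + 1 by ring,
    Nat.factorial_succ (2 * q + 1), Nat.factorial_succ q, add_assoc n q 1]
  push_cast
  field_simp
  ring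

lemma summable_pow_mul_factorial_div (n : ℕ) (z : ℝ) :
    Summable fun q : ℕ ↦ z ^ (2 * (q + 1)) * (2 * (q + 1)!)
      / ((2 * (q + 1))! * n ! * (n + (q + 1))!) := by
  rcases eq_or_ne z 0 with rfl | hz
  · simp
  · simpa only [one_pow, one_mul, mul_one] using (hasSum_pairedKernelSum hz n 1).summable

end SinhSeries

section LConvolutionChain

variable {G : Type*} [MeasurableSpace G] [AddCommGroup G]

lemma smul_lconvolution {μ : Measure G} {c : ℝ≥0∞} (hc : c ≠ ∞) (f g : G → ℝ≥0∞) :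
    (c • f) ⋆ₗ[μ] g = c • (f ⋆ₗ[μ] g) := by
  ext x
  simp only [lconvolution_def, Pi.smul_apply, smul_eq_mul, mul_assoc, lintegral_const_mul' _ _ hc]

lemma lconvolution_smul {μ : Measure G} {c : ℝ≥0∞} (hc : c ≠ ∞) (f g : G → ℝ≥0∞) :
    f ⋆ₗ[μ] (c • g) = c • (f ⋆ₗ[μ] g) := by
  ext x
  simp only [lconvolution_def, Pi.smul_apply, smul_eq_mul, mul_left_comm _ c,
    lintegral_const_mul' _ _ hc]

/-- The iterated convolution `F 0 ⋆ F 1 ⋆ ⋯ ⋆ F N` of `N + 1` functions. -/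
noncomputable def lconvolutionChain (μ : Measure G) : ℕ → (ℕ → G → ℝ≥0∞) → G → ℝ≥0∞
  | 0, F => F 0
  | N + 1, F => F 0 ⋆ₗ[μ] lconvolutionChain μ N fun i ↦ F (i + 1)

lemma lconvolutionChain_eq_iterate {μ : Measure G} {F : ℕ → G → ℝ≥0∞} {e : G → ℝ≥0∞} {p : ℕ}
    (hF : ∀ i < p, F i = e) (N : ℕ) :
    lconvolutionChain μ (N + p) F
      = (e ⋆ₗ[μ] ·)^[p] (lconvolutionChain μ N fun i ↦ F (i + p)) := by
  induction p generalizing F with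
  | zero => rfl
  | succ p ih =>
    rw [Function.iterate_succ_apply', ← hF 0 p.succ_pos]
    exact congrArg (F 0 ⋆ₗ[μ] ·) ((ih fun i hi ↦ hF _ (Nat.succ_lt_succ hi)).trans
      (by rw [hF 0 p.succ_pos]; rfl))

variable [MeasurableAdd₂ G] [MeasurableNeg G]

lemma measurable_lconvolutionChain {μ : Measure G} [SFinite μ] {F : ℕ → G → ℝ≥0∞}
    (hF : ∀ i, Measurable (F i)) (N : ℕ) : Measurable (lconvolutionChain μ N F) := by
  induction N generalizing F with
  | zero => exact hF 0
  | succ N ih => exact measurable_lconvolution μ (hF 0) (ih fun i ↦ hF (i + 1))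

section Invariant

variable {μ : Measure G} [SFinite μ] [μ.IsAddLeftInvariant] [μ.IsNegInvariant]

lemma lconvolution_left_comm {f g h : G → ℝ≥0∞} (hf : Measurable f) (hg : Measurable g)
    (hh : Measurable h) : f ⋆ₗ[μ] (g ⋆ₗ[μ] h) = g ⋆ₗ[μ] (f ⋆ₗ[μ] h) := by
  rw [lconvolution_assoc hf hg hh, lconvolution_comm (f := f), lconvolution_assoc hg hf hh]

lemma lconvolution_iterate_left_comm {f e g : G → ℝ≥0∞} (hf : Measurable f) (he : Measurable e)
    (hg : Measurable g) (p : ℕ) :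
    f ⋆ₗ[μ] (e ⋆ₗ[μ] ·)^[p] g = (e ⋆ₗ[μ] ·)^[p] (f ⋆ₗ[μ] g) := by
  induction p generalizing g with
  | zero => rfl
  | succ p ih =>
    rw [Function.iterate_succ_apply, Function.iterate_succ_apply,
      ih (measurable_lconvolution μ he hg), lconvolution_left_comm hf he hg]

end Invariant

lemma lintegral_pi_prod_mul_sub_sum {μ : Measure G} [SigmaFinite μ] {F : ℕ → G → ℝ≥0∞}
    (hF : ∀ i, Measurable (F i)) (N : ℕ) (x : G) :
    ∫⁻ v : Fin N → G, (∏ i : Fin N, F i (v i)) * F N (x - ∑ i, v i) ∂Measure.pi (fun _ ↦ μ)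
      = lconvolutionChain μ N F x := by
  induction N generalizing F x with
  | zero => simp [lconvolutionChain, lintegral_unique]
  | succ N ih =>
    have split := measurePreserving_piFinSuccAbove (fun _ : Fin (N + 1) ↦ μ) 0
    calc _ = ∫⁻ z : G × (Fin N → G), F 0 z.1 * ((∏ i : Fin N, F (i + 1) (z.2 i))
              * F (N + 1) (-z.1 + x - ∑ i, z.2 i)) ∂μ.prod (Measure.pi fun _ ↦ μ) := by
          rw [← split.lintegral_comp (by fun_prop)]
          refine lintegral_congr fun v ↦ ?_
          rw [Fin.prod_univ_succ, Fin.sum_univ_succ, mul_assoc, ← sub_sub, sub_eq_neg_add x (v 0)]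
          rfl
      _ = ∫⁻ y, F 0 y * lconvolutionChain μ N (fun i ↦ F (i + 1)) (-y + x) ∂μ := by
          rw [lintegral_prod _ (by fun_prop)]
          refine lintegral_congr fun y ↦ ?_
          rw [← ih fun i ↦ hF (i + 1), ← lintegral_const_mul _ (by fun_prop)]
      _ = _ := rfl

end LConvolutionChain

section HalfLine

/-- The extension of `h` from the half-line `x > 0` to `ℝ` by zero, with values in `ℝ≥0∞`;
convolutions of such functions over `ℝ` are convolutions over the half-line. -/
noncomputable def halfLineExt (h : ℝ → ℝ) : ℝ → ℝ≥0∞ :=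
  (Set.Ioi 0).indicator fun x ↦ ENNReal.ofReal (h x)

lemma measurable_halfLineExt {h : ℝ → ℝ} (hh : Measurable h) : Measurable (halfLineExt h) :=
  hh.ennreal_ofReal.indicator measurableSet_Ioi

lemma halfLineExt_of_pos {h : ℝ → ℝ} {x : ℝ} (hx : 0 < x) :
    halfLineExt h x = ENNReal.ofReal (h x) :=
  Set.indicator_of_mem (Set.mem_Ioi.2 hx) _

lemma halfLineExt_of_nonpos {h : ℝ → ℝ} {x : ℝ} (hx : x ≤ 0) : halfLineExt h x = 0 :=
  Set.indicator_of_notMem (Set.notMem_Ioi.2 hx) _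

lemma lconvolution_halfLineExt_apply (f g : ℝ → ℝ) (T : ℝ) :
    (halfLineExt f ⋆ₗ halfLineExt g) T
      = ∫⁻ x in Set.Ioo 0 T, ENNReal.ofReal (f x) * ENNReal.ofReal (g (T - x)) := by
  rw [lconvolution_def, ← lintegral_indicator measurableSet_Ioo]
  refine lintegral_congr fun x ↦ ?_
  rw [neg_add_eq_sub]
  rcases le_or_gt x 0 with hx | hx
  · simp [halfLineExt_of_nonpos hx, hx.not_gt]
  rcases le_or_gt T x with hxT | hxT
  · simp [halfLineExt_of_nonpos (sub_nonpos.2 hxT), hxT.not_gt]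
  · simp [halfLineExt_of_pos hx, halfLineExt_of_pos (sub_pos.2 hxT), hx, hxT]

lemma setLIntegral_Ioo_ofReal {f : ℝ → ℝ} (hf : Continuous f) {a b : ℝ} (hab : a ≤ b)
    (hf0 : ∀ x ∈ Set.Ioo a b, 0 ≤ f x) :
    ∫⁻ x in Set.Ioo a b, ENNReal.ofReal (f x) = ENNReal.ofReal (∫ x in a..b, f x) := by
  rw [intervalIntegral.integral_of_le hab, integral_Ioc_eq_integral_Ioo,
    ofReal_integral_eq_lintegral_ofReal
      ((hf.integrableOn_Icc).mono_set Set.Ioo_subset_Icc_self)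
      (ae_restrict_of_forall_mem measurableSet_Ioo hf0)]

lemma halfLineExt_lconvolution_halfLineExt {f g : ℝ → ℝ} (hf : Continuous f) (hg : Continuous g)
    (hf0 : ∀ x, 0 < x → 0 ≤ f x) (hg0 : ∀ x, 0 < x → 0 ≤ g x) :
    halfLineExt f ⋆ₗ halfLineExt g = halfLineExt fun T ↦ ∫ x in 0..T, f (T - x) * g x := by
  ext T
  rw [lconvolution_halfLineExt_apply]
  rcases le_or_gt T 0 with hT | hT
  · simp [halfLineExt_of_nonpos hT, hT]
  have hreal : ∫⁻ x in Set.Ioo 0 T, ENNReal.ofReal (f x) * ENNReal.ofReal (g (T - x))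
      = ∫⁻ x in Set.Ioo 0 T, ENNReal.ofReal (f x * g (T - x)) :=
    setLIntegral_congr_fun measurableSet_Ioo fun x hx ↦ (ENNReal.ofReal_mul (hf0 x hx.1)).symm
  rw [hreal, halfLineExt_of_pos hT, setLIntegral_Ioo_ofReal (by fun_prop) hT.le fun x hx ↦
    mul_nonneg (hf0 x hx.1) (hg0 _ (sub_pos.2 hx.2))]
  simpa using congrArg ENNReal.ofReal
    (intervalIntegral.integral_comp_sub_left (a := 0) (b := T) (fun x ↦ f (T - x) * g x) T)

lemma setIntegral_simplex_eq_toReal_lconvolutionChain {ψ : ℕ → ℝ → ℝ}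
    (hψ : ∀ i, Measurable (ψ i)) (hψ0 : ∀ i x, 0 < x → 0 ≤ ψ i x) (N : ℕ) (T : ℝ) :
    ∫ v in {v : Fin N → ℝ | (∀ i, 0 < v i) ∧ ∑ i, v i < T},
        (∏ i : Fin N, ψ i (v i)) * ψ N (T - ∑ i, v i)
      = (lconvolutionChain volume N (fun i ↦ halfLineExt (ψ i)) T).toReal := by
  set S := {v : Fin N → ℝ | (∀ i, 0 < v i) ∧ ∑ i, v i < T}
  have hS : MeasurableSet S := by measurability
  have hprod {v : Fin N → ℝ} (hv : v ∈ S) (i : Fin N) : 0 ≤ ψ i (v i) := hψ0 _ _ (hv.1 i)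
  have hlast {v : Fin N → ℝ} (hv : v ∈ S) : 0 ≤ ψ N (T - ∑ i, v i) :=
    hψ0 _ _ (sub_pos.2 hv.2)
  rw [integral_eq_lintegral_of_nonneg_ae
      (ae_restrict_of_forall_mem hS fun v hv ↦
        mul_nonneg (Finset.prod_nonneg fun i _ ↦ hprod hv i) (hlast hv))
      (Measurable.aestronglyMeasurable (by fun_prop)),
    ← lintegral_pi_prod_mul_sub_sum (fun i ↦ measurable_halfLineExt (hψ i)),
    ← lintegral_indicator hS]
  refine congrArg _ (lintegral_congr fun v ↦ ?_)
  by_cases hv : v ∈ S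
  · rw [Set.indicator_of_mem hv, ENNReal.ofReal_mul (Finset.prod_nonneg fun i _ ↦ hprod hv i),
      ENNReal.ofReal_prod_of_nonneg fun i _ ↦ hprod hv i, halfLineExt_of_pos (sub_pos.2 hv.2)]
    simp only [halfLineExt_of_pos (hv.1 _)]
  · rw [Set.indicator_of_notMem hv, eq_comm, mul_eq_zero, Finset.prod_eq_zero_iff]
    by_contra! hne
    refine hv ⟨fun i ↦ ?_, ?_⟩
    · exact not_le.1 fun hi ↦ hne.1 i (Finset.mem_univ i) (halfLineExt_of_nonpos hi)
    · exact not_le.1 fun hsum ↦ hne.2 (halfLineExt_of_nonpos (sub_nonpos.2 hsum))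

end HalfLine

section ExpKernelConvolution

lemma exp_lconvolution_expKernel (a : ℝ) (p q : ℕ) :
    halfLineExt (fun x ↦ exp (a * x)) ⋆ₗ halfLineExt (expKernel a p q)
      = halfLineExt (expKernel a (p + 1) q) :=
  halfLineExt_lconvolution_halfLineExt (by fun_prop) (continuous_expKernel a p q)
    (fun x _ ↦ (exp_pos _).le) (fun _ hx ↦ expKernel_nonneg a p q hx.le)

lemma iterate_exp_lconvolution_expKernel (a : ℝ) (p r q : ℕ) :
    (halfLineExt (fun x ↦ exp (a * x)) ⋆ₗ ·)^[p] (halfLineExt (expKernel a r q))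
      = halfLineExt (expKernel a (r + p) q) := by
  induction p with
  | zero => rfl
  | succ p ih => rw [Function.iterate_succ_apply', ih, exp_lconvolution_expKernel, add_assoc]

lemma expKernel_zero_zero (a : ℝ) : expKernel a 0 0 = fun _ ↦ 1 := by
  ext T
  simp [expKernel]

lemma one_lconvolution_expKernel_zero (a : ℝ) (q : ℕ) :
    halfLineExt (fun _ ↦ 1) ⋆ₗ halfLineExt (expKernel a 0 q)
      = halfLineExt (expKernel a 0 (q + 1)) := by
  rw [halfLineExt_lconvolution_halfLineExt continuous_const (continuous_expKernel a 0 q)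
    (fun _ _ ↦ zero_le_one) (fun _ hx ↦ expKernel_nonneg a 0 q hx.le)]
  congr with T
  have ftc := intervalIntegral.integral_eq_sub_of_hasDerivAt (a := 0) (b := T)
    (fun x _ ↦ hasDerivAt_expKernel_succ_right a 0 q x)
    ((continuous_expKernel a 0 q).intervalIntegrable _ _)
  simpa [expKernel_succ_right_apply_zero] using ftc

lemma lconvolutionChain_one (a : ℝ) (q : ℕ) :
    lconvolutionChain volume q (fun _ ↦ halfLineExt fun _ ↦ 1)
      = halfLineExt (expKernel a 0 q) := by
  induction q with
  | zero => rw [expKernel_zero_zero]; rfl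
  | succ q ih => rw [lconvolutionChain, ih, one_lconvolution_expKernel_zero]

lemma toReal_halfLineExt_expKernel_succ (a : ℝ) (p q : ℕ) {T : ℝ} (hT : 0 ≤ T) :
    (halfLineExt (expKernel a (p + 1) q) T).toReal = expKernel a (p + 1) q T := by
  rcases hT.eq_or_lt with rfl | hT
  · simp [halfLineExt_of_nonpos, expKernel_succ_left_apply_zero]
  · rw [halfLineExt_of_pos hT, ENNReal.toReal_ofReal (expKernel_nonneg a _ q hT.le)]

lemma Ikl_eq_expKernel (p q : ℕ) (u : ℝ) {L : ℝ} (hL : 0 ≤ L) :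
    Ikl (p + q + 2) (p + 2) u L = expKernel (2 * u) (p + 1) q (L / 2) := by
  set ψ : ℕ → ℝ → ℝ := fun i x ↦ if i < p + 1 then exp (2 * u * x) else 1 with hψ
  have hchain : lconvolutionChain volume (q + (p + 1)) (fun i ↦ halfLineExt (ψ i))
      = halfLineExt (expKernel (2 * u) (p + 1) q) := by
    rw [lconvolutionChain_eq_iterate (e := halfLineExt fun x ↦ exp (2 * u * x))
      fun i hi ↦ by simp only [hψ, if_pos hi]]
    simp only [hψ, add_lt_iff_neg_right, not_lt_zero, if_false]
    rw [lconvolutionChain_one (2 * u), iterate_exp_lconvolution_expKernel, zero_add]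
  have hsimplex := setIntegral_simplex_eq_toReal_lconvolutionChain (ψ := ψ)
    (fun i ↦ by simp only [hψ]; split_ifs <;> fun_prop)
    (fun i x _ ↦ by simp only [hψ]; split_ifs <;> positivity) (q + (p + 1)) (L / 2)
  rw [hchain, toReal_halfLineExt_expKernel_succ _ _ _ (by positivity)] at hsimplex
  rw [← hsimplex, Ikl, show p + q + 2 - 1 = q + (p + 1) by omega]
  congr with v
  simp only [hψ]
  rw [if_neg (by omega), mul_one, Finset.mul_sum, exp_sum, Finset.prod_filter]
  rfl

end ExpKernelConvolution

section BetaConvolution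

lemma lintegral_const_mul_rpow_mul_exp_neg_mul_Ioi {c α r : ℝ} (hc : 0 ≤ c) (hα : 0 < α)
    (hr : 0 < r) :
    ∫⁻ t in Set.Ioi 0, ENNReal.ofReal (c * (t ^ (α - 1) * exp (-(r * t))))
      = ENNReal.ofReal (c * (Gamma α * r ^ (-α))) := by
  have hvalue : ∫ t in Set.Ioi 0, t ^ (α - 1) * exp (-(r * t)) = Gamma α * r ^ (-α) := by
    rw [integral_rpow_mul_exp_neg_mul_Ioi hα hr, one_div, inv_rpow hr.le, ← rpow_neg hr.le,
      mul_comm]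
  have hne : ∫ t in Set.Ioi 0, t ^ (α - 1) * exp (-(r * t)) ≠ 0 := by
    rw [hvalue]
    positivity
  rw [← hvalue, ← integral_const_mul, ofReal_integral_eq_lintegral_ofReal
    ((Integrable.of_integral_ne_zero hne).const_mul c)]
  exact ae_restrict_of_forall_mem measurableSet_Ioi fun t (ht : 0 < t) ↦ by positivity

-- Insert `Γ(α + β) (s + b) ^ (-(α + β)) = ∫ t ^ (α + β - 1) exp (-(s + b) t) dt` and integrate
-- in `s` first.
lemma lintegral_rpow_mul_add_rpow_neg_Ioi {α β b : ℝ} (hα : 0 < α) (hβ : 0 < β) (hb : 0 < b) :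
    ∫⁻ s in Set.Ioi 0, ENNReal.ofReal (s ^ (α - 1) * (s + b) ^ (-(α + β)))
      = ENNReal.ofReal (Gamma α * Gamma β / Gamma (α + β) * b ^ (-β)) := by
  set k : ℝ → ℝ → ℝ := fun s t ↦
    s ^ (α - 1) / Gamma (α + β) * (t ^ (α + β - 1) * exp (-((s + b) * t))) with hk
  have hinner_t {s : ℝ} (hs : 0 < s) :
      ∫⁻ t in Set.Ioi 0, ENNReal.ofReal (k s t)
        = ENNReal.ofReal (s ^ (α - 1) * (s + b) ^ (-(α + β))) := by
    rw [lintegral_const_mul_rpow_mul_exp_neg_mul_Ioi (by positivity) (add_pos hα hβ)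
      (add_pos hs hb)]
    field_simp
  have hk_swap (s t : ℝ) : k s t = t ^ (α + β - 1) * exp (-(b * t)) / Gamma (α + β)
      * (s ^ (α - 1) * exp (-(t * s))) := by
    simp only [hk]
    rw [show -((s + b) * t) = -(b * t) + -(t * s) by ring, exp_add]
    ring
  have hinner_s {t : ℝ} (ht : 0 < t) :
      ∫⁻ s in Set.Ioi 0, ENNReal.ofReal (k s t)
        = ENNReal.ofReal (Gamma α / Gamma (α + β) * (t ^ (β - 1) * exp (-(b * t)))) := by
    simp only [hk_swap]
    rw [lintegral_const_mul_rpow_mul_exp_neg_mul_Ioi (by positivity) hα ht,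
      show β - 1 = α + β - 1 + -α by ring, rpow_add ht]
    ring_nf
  calc _ = ∫⁻ s in Set.Ioi 0, ∫⁻ t in Set.Ioi 0, ENNReal.ofReal (k s t) :=
        setLIntegral_congr_fun measurableSet_Ioi fun s hs ↦ (hinner_t hs).symm
    _ = ∫⁻ t in Set.Ioi 0, ∫⁻ s in Set.Ioi 0, ENNReal.ofReal (k s t) :=
        lintegral_lintegral_swap (Measurable.aemeasurable (by fun_prop))
    _ = _ := setLIntegral_congr_fun measurableSet_Ioi fun t ht ↦ hinner_s ht
    _ = _ := by
        rw [lintegral_const_mul_rpow_mul_exp_neg_mul_Ioi (by positivity) hβ hb]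
        ring_nf

lemma mapsTo_log_div_Ioi_Ioo {T : ℝ} (hT : 0 < T) :
    Set.MapsTo (fun s ↦ log ((exp T * s + 1) / (s + 1))) (Set.Ioi 0) (Set.Ioo 0 T) := by
  intro s (hs : 0 < s)
  have hexp : 1 < exp T := one_lt_exp_iff.2 hT
  constructor
  · refine log_pos ((one_lt_div (by positivity)).2 ?_)
    nlinarith
  · rw [log_lt_iff_lt_exp (by positivity), div_lt_iff₀ (by positivity)]
    linarith

lemma mapsTo_exp_sub_div_Ioo_Ioi (T : ℝ) :
    Set.MapsTo (fun x ↦ (exp x - 1) / (exp T - exp x)) (Set.Ioo 0 T) (Set.Ioi 0) :=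
  fun _ hx ↦ div_pos (sub_pos.2 (one_lt_exp_iff.2 hx.1)) (sub_pos.2 (exp_lt_exp.2 hx.2))

lemma invOn_exp_sub_div_log_div {T : ℝ} (hT : 0 < T) :
    Set.InvOn (fun x ↦ (exp x - 1) / (exp T - exp x)) (fun s ↦ log ((exp T * s + 1) / (s + 1)))
      (Set.Ioi 0) (Set.Ioo 0 T) := by
  have hexpT : exp T - 1 ≠ 0 := (sub_pos.2 (one_lt_exp_iff.2 hT)).ne'
  constructor
  · intro s (hs : 0 < s)
    have hden : exp T * (s + 1) - (exp T * s + 1) ≠ 0 := by ring_nf at hexpT ⊢; exact hexpT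
    simp only [exp_log (show 0 < (exp T * s + 1) / (s + 1) by positivity)]
    field_simp
    ring
  · intro x hx
    have hden : exp T - exp x ≠ 0 := (sub_pos.2 (exp_lt_exp.2 hx.2)).ne'
    have hratio : (exp T * ((exp x - 1) / (exp T - exp x)) + 1)
        / ((exp x - 1) / (exp T - exp x) + 1) = exp x := by
      have hnum : exp x - 1 + (exp T - exp x) ≠ 0 := by ring_nf at hexpT ⊢; exact hexpT
      field_simp
      ring
    simp only [hratio, log_exp]

lemma hasDerivAt_log_div (T : ℝ) {s : ℝ} (hs : 0 < s) :
    HasDerivAt (fun s ↦ log ((exp T * s + 1) / (s + 1))) (1 / (s + exp (-T)) - 1 / (s + 1)) s := by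
  have hnum : HasDerivAt (fun s ↦ exp T * s + 1) (exp T * 1) s :=
    ((hasDerivAt_id s).const_mul _).add_const 1
  have hden : HasDerivAt (fun s ↦ s + 1) 1 s := (hasDerivAt_id s).add_const 1
  refine ((hnum.fun_div hden (by positivity)).log (by positivity)).congr_deriv ?_
  rw [exp_neg]
  field_simp

lemma lintegral_comp_exp_sub_div {T : ℝ} (hT : 0 < T) (F : ℝ → ℝ≥0∞) :
    ∫⁻ x in Set.Ioo 0 T, F ((exp x - 1) / (exp T - exp x))
      = ∫⁻ s in Set.Ioi 0, ENNReal.ofReal (1 / (s + exp (-T)) - 1 / (s + 1)) * F s := by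
  have hinv := invOn_exp_sub_div_log_div hT
  have hbij := hinv.bijOn (mapsTo_log_div_Ioi_Ioo hT) (mapsTo_exp_sub_div_Ioo_Ioi T)
  rw [← hbij.image_eq, lintegral_image_eq_lintegral_abs_deriv_mul measurableSet_Ioi
    (fun s hs ↦ (hasDerivAt_log_div T hs).hasDerivWithinAt) hbij.injOn]
  refine setLIntegral_congr_fun measurableSet_Ioi fun s hs ↦ ?_
  have hs0 : 0 < s := hs
  have hderiv : 0 ≤ 1 / (s + exp (-T)) - 1 / (s + 1) :=
    sub_nonneg.2 (one_div_le_one_div_of_le (by positivity)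
      (by gcongr; exact exp_le_one_iff.2 (neg_nonpos.2 hT.le)))
  simp only [abs_of_nonneg hderiv]
  exact congrArg (_ * F ·) (hinv.1 hs)

lemma ofReal_one_div_sub_one_div_eq_lintegral {T s : ℝ} (hT : 0 ≤ T) (hs : 0 < s) :
    ENNReal.ofReal (1 / (s + exp (-T)) - 1 / (s + 1))
      = ∫⁻ y in Set.Ioo 0 T, ENNReal.ofReal (exp (-y) * (s + exp (-y)) ^ (-2 : ℝ)) := by
  have hpos (y : ℝ) : 0 < s + exp (-y) := by positivity
  have hcont : Continuous fun y ↦ exp (-y) * (s + exp (-y)) ^ (-2 : ℝ) :=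
    (by fun_prop : Continuous fun y ↦ exp (-y)).mul
      ((by fun_prop : Continuous fun y ↦ s + exp (-y)).rpow_const fun y ↦ .inl (hpos y).ne')
  have hderiv (y : ℝ) : HasDerivAt (fun y ↦ 1 / (s + exp (-y)))
      (exp (-y) * (s + exp (-y)) ^ (-2 : ℝ)) y := by
    simp only [one_div]
    refine (((hasDerivAt_id y).neg.exp.const_add s).inv (hpos y).ne').congr_deriv ?_
    rw [rpow_neg (hpos y).le, rpow_two]
    simp [div_eq_mul_inv]
  have ftc := intervalIntegral.integral_eq_sub_of_hasDerivAt (a := 0) (b := T)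
    (fun y _ ↦ hderiv y) (hcont.intervalIntegrable _ _)
  rw [neg_zero, exp_zero] at ftc
  rw [setLIntegral_Ioo_ofReal hcont hT fun y _ ↦ mul_nonneg (exp_pos _).le
    (rpow_nonneg (hpos y).le _), ftc]

lemma lintegral_exp_sub_div_rpow {a : ℝ} (ha : |a| < 1) {T : ℝ} (hT : 0 < T) :
    ∫⁻ x in Set.Ioo 0 T, ENNReal.ofReal (((exp x - 1) / (exp T - exp x)) ^ a)
      = ENNReal.ofReal (Gamma (1 + a) * Gamma (1 - a))
        * ∫⁻ y in Set.Ioo 0 T, ENNReal.ofReal (exp (-a * y)) := by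
  obtain ⟨ha₁, ha₂⟩ := abs_lt.1 ha
  have hbeta (y : ℝ) : ENNReal.ofReal (exp (-y))
        * ∫⁻ s in Set.Ioi 0, ENNReal.ofReal (s ^ a * (s + exp (-y)) ^ (-2 : ℝ))
      = ENNReal.ofReal (Gamma (1 + a) * Gamma (1 - a)) * ENNReal.ofReal (exp (-a * y)) := by
    have h := lintegral_rpow_mul_add_rpow_neg_Ioi (α := 1 + a) (β := 1 - a) (by linarith)
      (by linarith) (exp_pos (-y))
    rw [show 1 + a + (1 - a) = 2 by ring, add_sub_cancel_left, Gamma_two, div_one, ← exp_mul] at h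
    rw [h, mul_comm, ← ENNReal.ofReal_mul' (exp_pos _).le, mul_assoc, ← exp_add,
      ENNReal.ofReal_mul' (exp_pos _).le]
    ring_nf
  have hsplit {s : ℝ} (hs : s ∈ Set.Ioi 0) (y : ℝ) :
      ENNReal.ofReal (exp (-y) * (s + exp (-y)) ^ (-2 : ℝ)) * ENNReal.ofReal (s ^ a)
        = ENNReal.ofReal (exp (-y)) * ENNReal.ofReal (s ^ a * (s + exp (-y)) ^ (-2 : ℝ)) := by
    rw [ENNReal.ofReal_mul (exp_pos _).le, ENNReal.ofReal_mul (rpow_nonneg (le_of_lt hs) a)]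
    ring
  calc _ = ∫⁻ s in Set.Ioi 0, ENNReal.ofReal (1 / (s + exp (-T)) - 1 / (s + 1))
          * ENNReal.ofReal (s ^ a) :=
        lintegral_comp_exp_sub_div hT fun s ↦ ENNReal.ofReal (s ^ a)
    _ = ∫⁻ s in Set.Ioi 0, ∫⁻ y in Set.Ioo 0 T,
          ENNReal.ofReal (exp (-y)) * ENNReal.ofReal (s ^ a * (s + exp (-y)) ^ (-2 : ℝ)) := by
        refine setLIntegral_congr_fun measurableSet_Ioi fun s hs ↦ ?_
        simp only [← hsplit hs]
        rw [lintegral_mul_const' _ _ ENNReal.ofReal_ne_top,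
          ofReal_one_div_sub_one_div_eq_lintegral hT.le hs]
    _ = ∫⁻ y in Set.Ioo 0 T, ∫⁻ s in Set.Ioi 0,
          ENNReal.ofReal (exp (-y)) * ENNReal.ofReal (s ^ a * (s + exp (-y)) ^ (-2 : ℝ)) :=
        lintegral_lintegral_swap (Measurable.aemeasurable (by fun_prop))
    _ = _ := by
        simp only [lintegral_const_mul' _ _ ENNReal.ofReal_ne_top, hbeta]

lemma one_sub_exp_neg_rpow_mul (a : ℝ) {T x : ℝ} (hx : x ∈ Set.Ioo 0 T) :
    (1 - exp (-x)) ^ a * (exp (-a * (T - x)) * (1 - exp (-(T - x))) ^ (-a))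
      = ((exp x - 1) / (exp T - exp x)) ^ a := by
  have hnum : 0 < exp x - 1 := sub_pos.2 (one_lt_exp_iff.2 hx.1)
  have hden : 0 < exp T - exp x := sub_pos.2 (exp_lt_exp.2 hx.2)
  have h₁ : 1 - exp (-x) = (exp x - 1) * exp (-x) := by
    rw [sub_mul, ← exp_add, add_neg_cancel, exp_zero, one_mul]
  have h₂ : 1 - exp (-(T - x)) = (exp T - exp x) * exp (-T) := by
    rw [sub_mul, ← exp_add, ← exp_add, add_neg_cancel, exp_zero]
    ring_nf
  rw [h₁, h₂, mul_rpow hnum.le (exp_pos _).le, mul_rpow hden.le (exp_pos _).le,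
    div_rpow hnum.le hden.le, rpow_neg hden.le, ← exp_mul, ← exp_mul]
  have hexp : exp (-x * a) * (exp (-a * (T - x)) * exp (-T * -a)) = 1 := by
    rw [← exp_add, ← exp_add, exp_eq_one_iff]
    ring
  rw [div_eq_mul_inv]
  linear_combination (exp x - 1) ^ a * ((exp T - exp x) ^ a)⁻¹ * hexp

lemma one_sub_exp_neg_rpow_lconvolution {a : ℝ} (ha : |a| < 1) :
    halfLineExt (fun x ↦ (1 - exp (-x)) ^ a)
        ⋆ₗ halfLineExt (fun x ↦ exp (-a * x) * (1 - exp (-x)) ^ (-a))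
      = ENNReal.ofReal (Gamma (1 + a) * Gamma (1 - a))
        • (halfLineExt (fun x ↦ exp (-a * x)) ⋆ₗ halfLineExt (fun _ ↦ 1)) := by
  ext T
  simp only [Pi.smul_apply, smul_eq_mul, lconvolution_halfLineExt_apply, ENNReal.ofReal_one,
    mul_one]
  rcases le_or_gt T 0 with hT | hT
  · simp [hT]
  rw [← lintegral_exp_sub_div_rpow ha hT]
  refine setLIntegral_congr_fun measurableSet_Ioo fun x hx ↦ ?_
  rw [← ENNReal.ofReal_mul, one_sub_exp_neg_rpow_mul a hx]
  exact rpow_nonneg (sub_nonneg.2 (exp_le_one_iff.2 (neg_nonpos.2 hx.1.le))) a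

lemma Gamma_one_add_mul_Gamma_one_sub {a : ℝ} (ha : a ≠ 0) :
    Gamma (1 + a) * Gamma (1 - a) = π * a / sin (π * a) := by
  rw [add_comm, Gamma_add_one ha, mul_assoc, Gamma_mul_Gamma_one_sub]
  ring

end BetaConvolution

section TwistedSimplex

/-- The factor of the integrand of `Ĩ_{k,ℓ}` depending on `w_{i+1}`, where `a = 2u` and
`p = ℓ - 2`. -/
noncomputable def twistWeight (a : ℝ) (p : ℕ) : ℕ → ℝ → ℝ
  | 0 => fun x ↦ (1 - exp (-x)) ^ a
  | i + 1 => fun x ↦ (if i ≤ p then exp (-a * x) else 1)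
      * (if i = p then (1 - exp (-x)) ^ (-a) else 1)

lemma measurable_twistWeight (a : ℝ) (p i : ℕ) : Measurable (twistWeight a p i) := by
  cases i with
  | zero => simp only [twistWeight]; fun_prop
  | succ i => simp only [twistWeight]; split_ifs <;> fun_prop

lemma twistWeight_nonneg (a : ℝ) (p i : ℕ) {x : ℝ} (hx : 0 ≤ x) : 0 ≤ twistWeight a p i x := by
  have hbase : 0 ≤ 1 - exp (-x) := sub_nonneg.2 (exp_le_one_iff.2 (neg_nonpos.2 hx))
  cases i with
  | zero => exact rpow_nonneg hbase a
  | succ i => simp only [twistWeight]; split_ifs <;> positivity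

lemma twistWeight_succ_of_lt (a : ℝ) {p i : ℕ} (hi : i < p) :
    twistWeight a p (i + 1) = fun x ↦ exp (-a * x) := by
  simp only [twistWeight, hi.le, hi.ne, if_true, if_false, mul_one]

lemma twistWeight_succ_self (a : ℝ) (p : ℕ) :
    twistWeight a p (p + 1) = fun x ↦ exp (-a * x) * (1 - exp (-x)) ^ (-a) := by
  simp only [twistWeight, le_refl, if_true]

lemma twistWeight_succ_of_gt (a : ℝ) {p i : ℕ} (hi : p < i) :
    twistWeight a p (i + 1) = fun _ ↦ 1 := by
  simp only [twistWeight, hi.not_ge, hi.ne', if_false, mul_one]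

lemma prod_range_twistWeight (a : ℝ) (p q : ℕ) (x : ℕ → ℝ) :
    ∏ i ∈ Finset.range (q + p + 2), twistWeight a p i (x (i + 1))
      = exp (-a * ∑ j ∈ Finset.Icc 2 (p + 2), x j) * (1 - exp (-x (p + 2))) ^ (-a)
        * (1 - exp (-x 1)) ^ a := by
  have hsum : ∑ j ∈ Finset.Icc 2 (p + 2), x j = ∑ i ∈ Finset.range (p + 1), x (i + 2) := by
    rw [← Finset.Ico_add_one_right_eq_Icc, Finset.sum_Ico_eq_sum_range]
    simp only [add_comm 2]
    rfl
  have hfilter : (Finset.range (q + p + 1)).filter (· ≤ p) = Finset.range (p + 1) := by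
    ext i
    simp only [Finset.mem_filter, Finset.mem_range]
    omega
  rw [Finset.prod_range_succ']
  simp only [twistWeight]
  rw [Finset.prod_mul_distrib, Finset.prod_ite_eq', if_pos (Finset.mem_range.2 (by omega)),
    ← Finset.prod_filter, hfilter, hsum, Finset.mul_sum, exp_sum]

lemma prod_mul_last_eq_prod_range_wcoord (k : ℕ) (L : ℝ) (w : Fin (k - 1) → ℝ)
    (ψ : ℕ → ℝ → ℝ) :
    (∏ i : Fin (k - 1), ψ i (w i)) * ψ (k - 1) (L / 2 - ∑ i, w i)
      = ∏ i ∈ Finset.range (k - 1 + 1), ψ i (wcoord k L w (i + 1)) := by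
  rw [Finset.prod_range_succ, Finset.prod_range]
  simp only [wcoord, Nat.add_sub_cancel, lt_irrefl, dif_neg, not_false_eq_true, Fin.is_lt,
    dif_pos, Fin.eta]

-- Associativity isolates the beta-type convolution of the first weight with the last
-- nonconstant one.
lemma rpow_lconvolution_chain {a : ℝ} (ha : |a| < 1) {F : ℕ → ℝ → ℝ≥0∞}
    (hF0 : F 0 = halfLineExt fun x ↦ exp (-a * x) * (1 - exp (-x)) ^ (-a))
    (hF : ∀ i, F (i + 1) = halfLineExt fun _ ↦ 1) (q : ℕ) :
    halfLineExt (fun x ↦ (1 - exp (-x)) ^ a) ⋆ₗ lconvolutionChain volume q F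
      = ENNReal.ofReal (Gamma (1 + a) * Gamma (1 - a)) • halfLineExt (expKernel (-a) 1 q) := by
  have hbeta := one_sub_exp_neg_rpow_lconvolution ha
  cases q with
  | zero =>
    rw [lconvolutionChain, hF0, hbeta, ← expKernel_zero_zero (-a), exp_lconvolution_expKernel]
  | succ q =>
    have hmeas (p q : ℕ) := measurable_halfLineExt (continuous_expKernel (-a) p q).measurable
    rw [lconvolutionChain, funext hF, lconvolutionChain_one (-a), hF0,
      lconvolution_assoc (measurable_halfLineExt (by fun_prop))
        (measurable_halfLineExt (by fun_prop)) (hmeas 0 q),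
      hbeta, smul_lconvolution ENNReal.ofReal_ne_top,
      ← lconvolution_assoc (measurable_halfLineExt (by fun_prop))
        (measurable_halfLineExt measurable_const) (hmeas 0 q),
      one_lconvolution_expKernel_zero, exp_lconvolution_expKernel]

lemma lconvolutionChain_twistWeight {a : ℝ} (ha : |a| < 1) (p q : ℕ) :
    lconvolutionChain volume (q + p + 1) (fun i ↦ halfLineExt (twistWeight a p i))
      = ENNReal.ofReal (Gamma (1 + a) * Gamma (1 - a))
        • halfLineExt (expKernel (-a) (p + 1) q) := by
  have hmeas (i : ℕ) := measurable_halfLineExt (measurable_twistWeight a p i)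
  have hcommute (c : ℝ≥0∞) (hc : c ≠ ∞) : Function.Commute
      (halfLineExt (fun x ↦ exp (-a * x)) ⋆ₗ ·) (c • · : (ℝ → ℝ≥0∞) → ℝ → ℝ≥0∞) :=
    fun g ↦ lconvolution_smul hc _ g
  rw [lconvolutionChain, lconvolutionChain_eq_iterate (e := halfLineExt fun x ↦ exp (-a * x))
      fun i hi ↦ by rw [twistWeight_succ_of_lt a hi],
    lconvolution_iterate_left_comm (hmeas 0) (measurable_halfLineExt (by fun_prop))
      (measurable_lconvolutionChain (fun i ↦ hmeas _) q)]
  have hchain := rpow_lconvolution_chain ha (F := fun i ↦ halfLineExt (twistWeight a p (i + p + 1)))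
    (by rw [zero_add, twistWeight_succ_self])
    (fun i ↦ by rw [twistWeight_succ_of_gt a (by omega)]) q
  exact (congrArg _ hchain).trans (((hcommute _ ENNReal.ofReal_ne_top).iterate_left p _).trans
    (by rw [iterate_exp_lconvolution_expKernel, add_comm 1 p]))

lemma Itkl_eq_expKernel (p q : ℕ) {u L : ℝ} (hu : |u| < 1 / 2) (hL : 0 ≤ L) :
    Itkl (p + q + 2) (p + 2) u L
      = Gamma (1 + 2 * u) * Gamma (1 - 2 * u) * expKernel (-(2 * u)) (p + 1) q (L / 2) := by
  have h2u : |2 * u| < 1 := by rw [abs_mul, abs_two]; linarith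
  obtain ⟨hlower, hupper⟩ := abs_lt.1 h2u
  have hGamma : 0 ≤ Gamma (1 + 2 * u) * Gamma (1 - 2 * u) :=
    mul_nonneg (Gamma_nonneg_of_nonneg (by linarith)) (Gamma_nonneg_of_nonneg (by linarith))
  have hsimplex := setIntegral_simplex_eq_toReal_lconvolutionChain
    (measurable_twistWeight (2 * u) p) (fun i x hx ↦ twistWeight_nonneg (2 * u) p i hx.le)
    (p + q + 2 - 1) (L / 2)
  simp only [prod_mul_last_eq_prod_range_wcoord] at hsimplex
  rw [show p + q + 2 - 1 + 1 = q + p + 2 by omega] at hsimplex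
  simp only [prod_range_twistWeight] at hsimplex
  rw [Itkl, hsimplex, show p + q + 2 - 1 = q + p + 1 by omega, lconvolutionChain_twistWeight h2u,
    Pi.smul_apply, smul_eq_mul, ENNReal.toReal_mul, ENNReal.toReal_ofReal hGamma,
    toReal_halfLineExt_expKernel_succ _ _ _ (by positivity)]

end TwistedSimplex

lemma sum_Ikl_mul_Itkl (n : ℕ) {u L : ℝ} (hu : |u| < 1 / 2) (hL : 0 ≤ L) :
    ∑ l ∈ Finset.Icc 2 (n + 2), Ikl (n + 2) l u L * Itkl (n + 2) l u L
      = Gamma (1 + 2 * u) * Gamma (1 - 2 * u) * pairedKernelSum (2 * u) n (L / 2) (L / 2) := by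
  calc _ = ∑ p ∈ Finset.range (n + 1), Ikl (n + 2) (p + 2) u L * Itkl (n + 2) (p + 2) u L := by
        rw [← Finset.Ico_add_one_right_eq_Icc, Finset.sum_Ico_eq_sum_range]
        simp only [add_comm 2]
        rfl
    _ = ∑ pq ∈ antidiagonal n, Ikl (n + 2) (pq.1 + 2) u L * Itkl (n + 2) (pq.1 + 2) u L :=
        (Finset.Nat.sum_antidiagonal_eq_sum_range_succ_mk
          (fun pq ↦ Ikl (n + 2) (pq.1 + 2) u L * Itkl (n + 2) (pq.1 + 2) u L) n).symm
    _ = _ := by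
        rw [pairedKernelSum, Finset.mul_sum]
        refine Finset.sum_congr rfl fun pq hpq ↦ ?_
        rw [← Finset.HasAntidiagonal.mem_antidiagonal.1 hpq, Ikl_eq_expKernel _ _ _ hL,
          Itkl_eq_expKernel _ _ hu hL]
        ring

lemma four_zpow_one_sub_mul_pow (n : ℕ) (x : ℝ) :
    (4 : ℝ) ^ (1 - ((n + 2 : ℕ) : ℤ)) * x ^ (2 * (n + 2) - 4) = (x / 2) ^ (2 * n) / 4 := by
  rw [show 1 - ((n + 2 : ℕ) : ℤ) = -((n + 1 : ℕ) : ℤ) by push_cast; ring, zpow_neg, zpow_natCast,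
    show 2 * (n + 2) - 4 = 2 * n by omega, div_pow, pow_mul 2, pow_succ]
  norm_num
  field_simp

/-- **Sum over exit edges (proof of Proposition 5.2).** For `k ≥ 2`, `0 < |u| < 1/2`
and `L ≥ 0`:
`∑_{ℓ=2}^k I_{k,ℓ}(u,L) Ĩ_{k,ℓ}(u,L)
  = (2π/(u sin(2πu))) 4^{1−k} L^{2k−4} ∑_{p≥1} u^{2p} L^{2p} · 2 p!/((2p)!(k−2)!(k+p−2)!)`,
the series (indexed here by `p = q+1`, `q ≥ 0`) converging absolutely. -/
theorem stmt_7 (k : ℕ) (hk : 2 ≤ k) (u L : ℝ) (hu0 : 0 < |u|) (hu : |u| < 1/2) (hL : 0 ≤ L) :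
    Summable (fun q : ℕ =>
        |u^(2*(q+1)) * L^(2*(q+1)) * (2 * ((q+1).factorial : ℝ))
          / (((2*(q+1)).factorial : ℝ) * ((k-2).factorial : ℝ)
              * ((k+(q+1)-2).factorial : ℝ))|) ∧
    ∑ l ∈ Finset.Icc 2 k, Ikl k l u L * Itkl k l u L
      = (2*π / (u * Real.sin (2*π*u))) * (4:ℝ)^(1 - (k:ℤ)) * L^(2*k-4)
        * ∑' q : ℕ, u^(2*(q+1)) * L^(2*(q+1)) * (2 * ((q+1).factorial : ℝ))
            / (((2*(q+1)).factorial : ℝ) * ((k-2).factorial : ℝ)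
                * ((k+(q+1)-2).factorial : ℝ)) := by
  have h2u : 2 * u ≠ 0 := mul_ne_zero two_ne_zero (abs_pos.1 hu0)
  obtain ⟨n, rfl⟩ := Nat.exists_eq_add_of_le' hk
  simp only [← mul_pow, Nat.add_sub_cancel, Nat.add_right_comm n 2]
  refine ⟨(summable_pow_mul_factorial_div n (u * L)).abs, ?_⟩
  set S := ∑' q : ℕ, (u * L) ^ (2 * (q + 1)) * (2 * (q + 1)!)
    / ((2 * (q + 1))! * n ! * (n + (q + 1))!)
  have hseries : (L / 2) ^ (2 * n) * S
      = (2 * u) ^ 2 * pairedKernelSum (2 * u) n (L / 2) (L / 2) := by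
    rw [← (hasSum_pairedKernelSum h2u n (L / 2)).tsum_eq, tsum_mul_left,
      show 2 * u * (L / 2) = u * L by ring]
  calc _ = 2 * π * u / sin (2 * π * u) * pairedKernelSum (2 * u) n (L / 2) (L / 2) := by
        rw [sum_Ikl_mul_Itkl n hu hL, Gamma_one_add_mul_Gamma_one_sub h2u]
        ring_nf
    _ = 2 * π / (u * sin (2 * π * u)) / 4 * ((L / 2) ^ (2 * n) * S) := by
        rw [hseries]
        field_simp
        ring
    _ = _ := by
        rw [mul_assoc (2 * π / _), four_zpow_one_sub_mul_pow]
        ring
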